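/- arXiv:1207.0725 — 3 statements merged into one kernel-verified Lean document; each statement's English description precedes it below -/
import Mathlib

section
/- For every p > 0, ∫_0^1 [ 1 − ((1 − z)/(1 + z))^{p/2} · (1 + p·z + z²)/(1 − z²) ] · (dz/z) = ψ(p/4) − ψ(1/2) − 1 + 2/p, where ψ denotes the digamma function, ψ(x) := deriv (fun x => Real.log (Real.Gamma x)) x, i.e. the logarithmic derivative of the Gamma function. Equivalently, the normalisation constant A of the q = 1 stationary density satisfies 1/A = (1/2)·(ψ(p/4) − ψ(1/2))/(p/4 − 1/2) − 2/p when p ≠ 2. -/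
open intervalIntegral

/-- The digamma function: the logarithmic derivative of the Gamma function. -/
noncomputable def digamma (x : ℝ) : ℝ :=
  deriv (fun x => Real.log (Real.Gamma x)) x

open MeasureTheory Set Filter Topology

lemma aux_uniq_half (f : ℝ → ℝ) (hm : MonotoneOn f (Ioi 0))
    (hr : ∀ x, 0 < x → f (x + 1) = f x + 1 / x) (y x : ℝ) (hy : 0 < y) (hyx : y ≤ x) :
    Tendsto (fun n : ℕ => f (x + n) - f (y + n)) atTop (𝓝 0) := by
  obtain ⟨k, hk⟩ := exists_nat_ge (x - y)
  have hb : ∀ (k : ℕ) (u : ℝ), 0 < u → f (u + k) ≤ f u + k / u := by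
    intro k u hu
    induction k with
    | zero => simp
    | succ k ih =>
      have h1 := hr (u + k) (by positivity)
      have h2 : 1 / (u + k) ≤ 1 / u := by
        apply one_div_le_one_div_of_le hu
        have : (0:ℝ) ≤ k := by positivity
        linarith
      push_cast
      rw [← add_assoc, h1, add_div]
      linarith
  have hlim : Tendsto (fun n : ℕ => (k:ℝ) / (y + n)) atTop (𝓝 0) := by
    apply Tendsto.const_div_atTop
    exact tendsto_atTop_add_const_left _ _ tendsto_natCast_atTop_atTop
  refine squeeze_zero ?_ ?_ hlim
  · intro n
    have : (0:ℝ) ≤ n := by positivity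
    exact sub_nonneg.2 (hm (by simp; linarith) (by simp; linarith) (by linarith))
  · intro n
    have hn : (0:ℝ) ≤ n := by positivity
    have h1 : f (x + n) ≤ f (y + n + k) :=
      hm (by simp; linarith) (by simp; positivity) (by linarith)
    have h2 := hb k (y + n) (by positivity)
    linarith

lemma aux_shift (f : ℝ → ℝ) (g : ℝ → ℝ)
    (hr : ∀ x, 0 < x → f (x + 1) = f x + 1 / x)
    (hs : ∀ x, 0 < x → g (x + 1) = g x + 1 / x) (x : ℝ) (hx : 0 < x) (n : ℕ) :
    f (x + n) - g (x + n) = f x - g x := by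
  induction n with
  | zero => simp
  | succ n ih =>
    push_cast
    rw [← add_assoc, hr _ (by positivity), hs _ (by positivity)]
    linarith

lemma aux_uniq_le (f g : ℝ → ℝ) (hm : MonotoneOn f (Ioi 0)) (hg : MonotoneOn g (Ioi 0))
    (hr : ∀ x, 0 < x → f (x + 1) = f x + 1 / x)
    (hs : ∀ x, 0 < x → g (x + 1) = g x + 1 / x) (y x : ℝ) (hy : 0 < y) (hyx : y ≤ x) :
    f x - f y = g x - g y := by
  have h1 := (aux_uniq_half f hm hr y x hy hyx).sub (aux_uniq_half g hg hs y x hy hyx)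
  have h2 : ∀ n : ℕ, (f (x + n) - f (y + n)) - (g (x + n) - g (y + n))
      = (f x - g x) - (f y - g y) := by
    intro n
    rw [← aux_shift f g hr hs x (by linarith) n, ← aux_shift f g hr hs y hy n]
    ring
  simp only [h2] at h1
  have := tendsto_nhds_unique h1 tendsto_const_nhds
  linarith

lemma aux_uniq (f g : ℝ → ℝ) (hm : MonotoneOn f (Ioi 0)) (hg : MonotoneOn g (Ioi 0))
    (hr : ∀ x, 0 < x → f (x + 1) = f x + 1 / x)
    (hs : ∀ x, 0 < x → g (x + 1) = g x + 1 / x) (y x : ℝ) (hy : 0 < y) (hx : 0 < x) :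
    f x - f y = g x - g y := by
  rcases le_total y x with h | h
  · exact aux_uniq_le f g hm hg hr hs y x hy h
  · have := aux_uniq_le f g hm hg hr hs x y hx h
    linarith

lemma lgamma_diff (x : ℝ) (hx : 0 < x) :
    DifferentiableAt ℝ (fun x => Real.log (Real.Gamma x)) x := by
  refine (Real.differentiableAt_Gamma ?_).log (Real.Gamma_pos_of_pos hx).ne'
  intro m h
  have : (0:ℝ) ≤ m := by positivity
  linarith

lemma digamma_mono : MonotoneOn digamma (Ioi 0) := by
  have h := Real.convexOn_log_Gamma.monotoneOn_deriv (fun x hx => lgamma_diff x hx)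
  exact h

lemma digamma_rec (x : ℝ) (hx : 0 < x) : digamma (x + 1) = digamma x + 1 / x := by
  unfold digamma
  have h1 : deriv (fun y => Real.log (Real.Gamma (y + 1))) x =
      deriv (fun x => Real.log (Real.Gamma x)) (x + 1) :=
    deriv_comp_add_const (fun x => Real.log (Real.Gamma x)) 1 x
  rw [← h1]
  have h2 : (fun y => Real.log (Real.Gamma (y + 1))) =ᶠ[𝓝 x]
      (fun y => Real.log (Real.Gamma y) + Real.log y) := by
    filter_upwards [lt_mem_nhds hx] with y hy
    rw [Real.Gamma_add_one hy.ne', Real.log_mul hy.ne' (Real.Gamma_pos_of_pos hy).ne', add_comm]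
  rw [h2.deriv_eq, deriv_fun_add (lgamma_diff x hx) (Real.differentiableAt_log hx.ne'),
    Real.deriv_log, one_div]

noncomputable def gk (b t : ℝ) : ℝ := 2 * (1 - t ^ b) / (1 - t ^ 2)

lemma rpow_int (b : ℝ) (hb : -1 < b) : IntegrableOn (fun t : ℝ => t ^ b) (Ioo 0 1) :=
  (intervalIntegral.integrableOn_Ioo_rpow_iff one_pos).2 hb

lemma rpow_val (b : ℝ) (hb : -1 < b) : ∫ t in Ioo (0:ℝ) 1, t ^ b = 1 / (b + 1) := by
  rw [← integral_Ioc_eq_integral_Ioo, ← intervalIntegral.integral_of_le zero_le_one,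
    integral_rpow (Or.inl hb), Real.one_rpow, Real.zero_rpow (by linarith), sub_zero]

lemma gk_shift (b t : ℝ) (ht : t ∈ Ioo (0:ℝ) 1) : gk (b + 2) t = gk b t + 2 * t ^ b := by
  have h : 1 - t ^ 2 ≠ 0 := by nlinarith [ht.1, ht.2]
  unfold gk
  rw [Real.rpow_add ht.1, Real.rpow_two]
  field_simp
  ring

lemma gk_int1 (b : ℝ) (hb : 1 ≤ b) : IntegrableOn (gk b) (Ioo 0 1) := by
  refine Measure.integrableOn_of_bounded (M := 2 * b) (by simp) ?_ ?_
  · unfold gk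
    exact Measurable.aestronglyMeasurable (by fun_prop)
  · refine (ae_restrict_iff' measurableSet_Ioo).2 (Eventually.of_forall fun t ht => ?_)
    have h1 := one_add_mul_self_le_rpow_one_add (s := t - 1) (by linarith [ht.1]) hb
    rw [add_sub_cancel] at h1
    have h2 : t ^ b ≤ 1 := Real.rpow_le_one ht.1.le ht.2.le (by linarith)
    have h : 0 < 1 - t ^ 2 := by nlinarith [ht.1, ht.2]
    unfold gk
    rw [Real.norm_of_nonneg (div_nonneg (by linarith) h.le), div_le_iff₀ h]
    have : 1 - t ≤ 1 - t ^ 2 := by nlinarith [ht.1, ht.2]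
    nlinarith

lemma gk_int (b : ℝ) (hb : -1 < b) : IntegrableOn (gk b) (Ioo 0 1) := by
  have h := (gk_int1 (b + 2) (by linarith)).sub ((rpow_int b hb).const_mul 2)
  refine IntegrableOn.congr_fun h (fun t ht => ?_) measurableSet_Ioo
  simp [gk_shift b t ht]

noncomputable def Fk (x : ℝ) : ℝ := ∫ t in Ioo (0:ℝ) 1, gk (2 * x - 1) t

lemma Fk_mono : MonotoneOn Fk (Ioi 0) := by
  intro x hx y hy hxy
  have hx' : 0 < x := hx
  have hy' : 0 < y := hy
  refine setIntegral_mono_on (gk_int _ (by linarith)) (gk_int _ (by linarith))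
    measurableSet_Ioo (fun t ht => ?_)
  have h : 0 < 1 - t ^ 2 := by nlinarith [ht.1, ht.2]
  have := Real.rpow_le_rpow_of_exponent_ge ht.1 ht.2.le (by linarith : 2 * x - 1 ≤ 2 * y - 1)
  unfold gk
  gcongr

lemma Fk_rec (x : ℝ) (hx : 0 < x) : Fk (x + 1) = Fk x + 1 / x := by
  have h : Fk (x + 1) = ∫ t in Ioo (0:ℝ) 1, (gk (2 * x - 1) t + 2 * t ^ (2 * x - 1)) := by
    refine setIntegral_congr_fun measurableSet_Ioo (fun t ht => ?_)
    have := gk_shift (2 * x - 1) t ht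
    rw [← this]
    ring_nf
  rw [h, integral_add (gk_int _ (by linarith)) ((rpow_int _ (by linarith)).const_mul 2),
    MeasureTheory.integral_const_mul, rpow_val _ (by linarith)]
  unfold Fk
  field_simp
  ring

lemma Fk_half : Fk (1 / 2) = 0 := by
  simp [Fk, gk]

lemma Fk_eq (x : ℝ) (hx : 0 < x) : Fk x = digamma x - digamma (1 / 2) := by
  have := aux_uniq Fk digamma Fk_mono digamma_mono Fk_rec digamma_rec (1 / 2) x (by norm_num) hx
  rw [Fk_half] at this
  linarith

lemma cayley_image : (fun t : ℝ => (1 - t) / (1 + t)) '' Ioo 0 1 = Ioo 0 1 := by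
  have key : ∀ t ∈ Ioo (0:ℝ) 1, (1 - t) / (1 + t) ∈ Ioo (0:ℝ) 1 := by
    intro t ht
    have : 0 < 1 + t := by linarith [ht.1]
    refine ⟨div_pos (by linarith [ht.2]) this, ?_⟩
    rw [div_lt_one this]
    linarith [ht.1]
  ext z
  constructor
  · rintro ⟨t, ht, rfl⟩
    exact key t ht
  · intro hz
    refine ⟨_, key z hz, ?_⟩
    have : 1 + z ≠ 0 := by linarith [hz.1]
    simp only
    field_simp
    ring

lemma cayley_subst (g : ℝ → ℝ) : ∫ z in Ioo (0:ℝ) 1, g z =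
    ∫ t in Ioo (0:ℝ) 1, 2 / (1 + t) ^ 2 * g ((1 - t) / (1 + t)) := by
  have h := integral_image_eq_integral_abs_deriv_smul (s := Ioo (0:ℝ) 1)
    (f := fun t : ℝ => (1 - t) / (1 + t)) (f' := fun t => -(2 / (1 + t) ^ 2)) measurableSet_Ioo
    (fun t ht => ?_) (fun a ha b hb hab => ?_) g
  · rw [cayley_image] at h
    rw [h]
    refine setIntegral_congr_fun measurableSet_Ioo (fun t ht => ?_)
    simp only [abs_neg, smul_eq_mul]
    rw [abs_of_nonneg (by positivity)]
  · have h0 : 1 + t ≠ 0 := by linarith [ht.1]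
    have := ((hasDerivAt_id t).const_sub 1).div ((hasDerivAt_id t).const_add 1) h0
    refine (this.congr_deriv ?_).hasDerivWithinAt
    simp only [id]
    field_simp
    ring
  · have h1 : 1 + a ≠ 0 := by linarith [ha.1]
    have h2 : 1 + b ≠ 0 := by linarith [hb.1]
    simp only at hab
    field_simp at hab
    linarith

/-- **Normalisation integral of the `q = 1` stationary density.**
For every `p > 0`,
`∫_0^1 [1 - ((1-z)/(1+z))^{p/2} (1+pz+z²)/(1-z²)] dz/z = ψ(p/4) - ψ(1/2) - 1 + 2/p`. -/
theorem normalisation_integral_q_one (p : ℝ) (hp : 0 < p) :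
    ∫ z in (0:ℝ)..1,
        (1 - ((1 - z) / (1 + z)) ^ (p / 2) *
          ((1 + p * z + z ^ 2) / (1 - z ^ 2))) * (1 / z) =
      digamma (p / 4) - digamma (1 / 2) - 1 + 2 / p := by
  rw [intervalIntegral.integral_of_le zero_le_one, integral_Ioc_eq_integral_Ioo, cayley_subst]
  have h : ∀ t ∈ Ioo (0:ℝ) 1, 2 / (1 + t) ^ 2 *
      ((1 - ((1 - (1 - t) / (1 + t)) / (1 + (1 - t) / (1 + t))) ^ (p / 2) *
          ((1 + p * ((1 - t) / (1 + t)) + ((1 - t) / (1 + t)) ^ 2) /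
            (1 - ((1 - t) / (1 + t)) ^ 2))) * (1 / ((1 - t) / (1 + t))))
      = gk (2 * (p / 4) - 1) t + (1 - p / 2) * t ^ (2 * (p / 4) - 1) := by
    intro t ht
    have h0 : t ≠ 0 := ht.1.ne'
    have h1 : 1 + t ≠ 0 := by linarith [ht.1]
    have h2 : 1 - t ≠ 0 := by linarith [ht.2]
    have h3 : 1 - t ^ 2 ≠ 0 := by nlinarith [ht.1, ht.2]
    have e1 : (1 - (1 - t) / (1 + t)) / (1 + (1 - t) / (1 + t)) = t := by
      have : 1 + (1 - t) / (1 + t) = 2 / (1 + t) := by field_simp; ring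
      rw [this]
      field_simp
      ring
    have e2 : 1 - ((1 - t) / (1 + t)) ^ 2 = 4 * t / (1 + t) ^ 2 := by field_simp; ring
    have e3 : t ^ (p / 2) = t ^ (2 * (p / 4) - 1) * t := by
      rw [← Real.rpow_add_one h0]
      ring_nf
    have e4 : 1 - t ^ 2 = (1 - t) * (1 + t) := by ring
    rw [e1, e2, e3]
    unfold gk
    rw [e4]
    generalize t ^ (2 * (p / 4) - 1) = w
    field_simp
    ring
  rw [setIntegral_congr_fun measurableSet_Ioo h,
    integral_add (gk_int _ (by linarith)) ((rpow_int _ (by linarith)).const_mul _),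
    MeasureTheory.integral_const_mul, rpow_val _ (by linarith)]
  have := Fk_eq (p / 4) (by linarith)
  unfold Fk at this
  rw [this]
  field_simp
  ring
end

section
/- Let p > 0 and q > 0 with p/2 + 2q − 1 ≠ 0, let (yₙ)_{n≥0} be defined by y₀ = 1, y₁ = p·q/(2q + 1), and (n + 2)(n + 2q + 2)·y_{n+2} = p·(n + q + 1)·y_{n+1} + n·(n + 2q)·yₙ for n ≥ 0, and define F(z) := (1 − z)^{p/2 + 2q − 1}/(p/2 + 2q − 1) · ₂F₁( p/4 + q − 1/2, p/4; q + 1/2; z² ). Then for every z ∈ (0, 1): ∑_{n≥0} yₙ·zⁿ = −(1 − z)^{2(1 − q)} · ( (1 + z)/(1 − z) )^{p/2} · F'(z). -/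
/-- The Pochhammer rising factorial `(a)ₙ = a (a+1) ⋯ (a+n-1)`. -/
noncomputable def poch (a : ℝ) : ℕ → ℝ
  | 0 => 1
  | n + 1 => poch a n * (a + n)

/-- The Gauss hypergeometric function `₂F₁(a, b; c; x)`, defined for `|x| < 1`
by the convergent power series `∑ (a)ₙ (b)ₙ / (c)ₙ · xⁿ/n!`. -/
noncomputable def hyp2F1 (a b c x : ℝ) : ℝ :=
  ∑' n : ℕ, poch a n * poch b n / poch c n * x ^ n / (Nat.factorial n : ℝ)


open PowerSeries in
theorem heun_alg {R : Type*} [CommRing R] (z b q u0 u1 u2 u3 B B1 B2 s G G1 G2 : R)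
    (hs : s = b + 2 * q - 1)
    (hG : G = s * u0 - (1 - z) * u1) (hG1 : G1 = (s + 1) * u1 - (1 - z) * u2)
    (hG2 : G2 = (s + 2) * u2 - (1 - z) * u3)
    (hB1 : (1 + z) * B1 = b * B) (hB2 : B1 + (1 + z) * B2 = b * B1)
    (hO : z * (1 - z ^ 2) * u2 - ((2 * b + 2 * q) * z ^ 2 * u1 + z * s * b * u0 - 2 * q * u1) = 0)
    (hO1 : z * (1 - z ^ 2) * u3 + (1 - 3 * z ^ 2) * u2
      - ((2 * b + 2 * q) * z ^ 2 * u2 + (2 * b + 2 * q) * 2 * z * u1 + z * s * b * u1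
        + s * b * u0 - 2 * q * u2) = 0) :
    (1 + z) ^ 2 * ((1 - z ^ 2) * (z * (B2 * G + 2 * B1 * G1 + B * G2)
      + (1 + 2 * q) * (B1 * G + B * G1))
      - 2 * b * (z * (B1 * G + B * G1) + q * (B * G))) = 0 := by
  subst hG hG1 hG2 hs
  linear_combination (B * (1 + z) * ((b + 2 * q - 1 + 2) + (b + 2 * q - 1) * z)) * hO
    + (B * (-((1 + z) ^ 2 * (1 - z)))) * hO1
    + ((1 - z ^ 2) * z * ((b + 2 * q - 1) * u0 - (1 - z) * u1) * (1 + z)) * hB2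
    + ((1 - z ^ 2) * z * ((b + 2 * q - 1) * u0 - (1 - z) * u1) * (b - 1)
      + (1 - z ^ 2) * z * 2 * ((b + 2 * q - 1 + 1) * u1 - (1 - z) * u2) * (1 + z)
      + ((1 - z ^ 2) * (1 + 2 * q) - 2 * b * z) * ((b + 2 * q - 1) * u0 - (1 - z) * u1)
        * (1 + z)) * hB1

/-- a formal power series sums to `v` at `z` -/
def SumsTo (A : PowerSeries ℝ) (z v : ℝ) : Prop :=
  HasSum (fun n => PowerSeries.coeff n A * z ^ n) v

theorem SumsTo.mul {A B : PowerSeries ℝ} {z v w : ℝ} (hA : SumsTo A z v) (hB : SumsTo B z w) :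
    SumsTo (A * B) z (v * w) := by
  have hA' := hA.summable.norm
  have hB' := hB.summable.norm
  have h1 := (summable_norm_sum_mul_antidiagonal_of_summable_norm hA' hB').of_norm
  have h2 := tsum_mul_tsum_eq_tsum_sum_antidiagonal_of_summable_norm hA' hB'
  have h3 := h1.hasSum
  rw [← h2, hA.tsum_eq, hB.tsum_eq] at h3
  unfold SumsTo
  refine h3.congr_fun ?_
  intro n
  rw [PowerSeries.coeff_mul, Finset.sum_mul]
  refine Finset.sum_congr rfl fun kl hkl => ?_
  rw [← Finset.HasAntidiagonal.mem_antidiagonal.mp hkl, pow_add]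
  ring

theorem SumsTo.sub {A B : PowerSeries ℝ} {z v w : ℝ} (hA : SumsTo A z v) (hB : SumsTo B z w) :
    SumsTo (A - B) z (v - w) := by
  have := HasSum.sub hA hB
  unfold SumsTo
  refine this.congr_fun ?_
  intro n
  simp [sub_mul]

theorem sumsTo_C (c z : ℝ) : SumsTo (PowerSeries.C c) z c := by
  unfold SumsTo
  convert hasSum_single (f := fun n => PowerSeries.coeff n (PowerSeries.C c) * z ^ n) 0 ?_ using 1
  · simp
  · intro n hn
    simp [PowerSeries.coeff_C, hn]

theorem sumsTo_X (z : ℝ) : SumsTo PowerSeries.X z z := by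
  unfold SumsTo
  convert hasSum_single
    (f := fun n => PowerSeries.coeff n (PowerSeries.X : PowerSeries ℝ) * z ^ n) 1 ?_ using 1
  · simp
  · intro n hn
    simp [PowerSeries.coeff_X, hn]

theorem sumsTo_binom (a z : ℝ) (hz : |z| < 1) :
    SumsTo (PowerSeries.mk fun n => Ring.choose a n) z ((1 + z) ^ a) := by
  have h := (Real.one_add_rpow_hasFPowerSeriesOnBall_zero (a := a)).hasSum (y := z) (by
    rw [← ENNReal.ofReal_one, Metric.eball_ofReal]; simpa using hz)
  unfold SumsTo
  simpa [binomialSeries, mul_comm] using h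

theorem choose_succ_real (a : ℝ) (n : ℕ) :
    Ring.choose a (n + 1) * (n + 1) = (a - n) * Ring.choose a n := by
  have h1 := Ring.descPochhammer_eq_factorial_smul_choose a n
  have h2 := Ring.descPochhammer_eq_factorial_smul_choose a (n + 1)
  rw [descPochhammer_succ_right, Polynomial.smeval_mul, h1] at h2
  have h3 : ((n.factorial : ℕ) : ℝ) ≠ 0 := by positivity
  simp [Polynomial.smeval_natCast, Nat.factorial_succ] at h2
  apply mul_left_cancel₀ h3
  linear_combination -h2

open PowerSeries in
theorem binom_ode (a : ℝ) :
    (1 + X) * (d⁄dX ℝ (PowerSeries.mk fun n => Ring.choose a n)) =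
      C a * (PowerSeries.mk fun n => Ring.choose a n) := by
  ext n
  rw [add_mul, one_mul]
  cases n with
  | zero =>
    rw [map_add, coeff_zero_X_mul, coeff_derivative, coeff_C_mul]
    simp
  | succ n =>
    have := choose_succ_real a (n + 1)
    simp [coeff_derivative, coeff_succ_X_mul]
    push_cast at this
    linear_combination this

theorem sumsTo_deriv (A : PowerSeries ℝ)
    (hA : ∀ w : ℝ, |w| < 1 → Summable fun n => PowerSeries.coeff n A * w ^ n)
    (z : ℝ) (hz : |z| < 1) :
    ∃ v, HasDerivAt (fun w => ∑' n, PowerSeries.coeff n A * w ^ n) v z ∧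
      SumsTo (PowerSeries.derivative ℝ A) z v := by
  obtain ⟨r, hr1, hr2⟩ := exists_between hz
  obtain ⟨r', hr3, hr4⟩ := exists_between hr2
  have hr0 : 0 < r := (abs_nonneg z).trans_lt hr1
  have hr'0 : 0 < r' := hr0.trans hr3
  have hs := hA r' (by rwa [abs_of_pos hr'0])
  obtain ⟨K, hK⟩ := hs.tendsto_atTop_zero.norm.bddAbove_range
  have hK' : ∀ n, |PowerSeries.coeff n A| * r' ^ n ≤ K := by
    intro n
    have := hK ⟨n, rfl⟩
    simpa [abs_mul, abs_of_pos hr'0] using this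
  have hK0 : 0 ≤ K := le_trans (by positivity) (hK' 0)
  let u : ℕ → ℝ := fun n => (K / r) * ((n : ℝ) ^ 1 * (r / r') ^ n)
  have hq : r / r' < 1 := (div_lt_one hr'0).2 hr3
  have hu : Summable u := by
    apply Summable.mul_left
    apply summable_pow_mul_geometric_of_norm_lt_one
    rw [Real.norm_of_nonneg (by positivity)]
    exact hq
  have hbd : ∀ (n : ℕ) (y : ℝ), y ∈ Metric.ball (0 : ℝ) r →
      ‖PowerSeries.coeff n A * (n * y ^ (n - 1))‖ ≤ u n := by
    intro n y hy
    have hy' : |y| < r := by simpa using hy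
    cases n with
    | zero => simp [u]
    | succ n =>
      simp only [u, norm_mul, norm_pow, Real.norm_eq_abs, Nat.add_sub_cancel, pow_one, Nat.abs_cast]
      have h1 : |y| ^ n ≤ r ^ n := pow_le_pow_left₀ (abs_nonneg _) hy'.le n
      have h2 : |PowerSeries.coeff (n + 1) A| ≤ K / r' ^ (n + 1) := by
        rw [le_div_iff₀ (by positivity)]; exact hK' _
      calc _ ≤ K / r' ^ (n + 1) * (((n + 1 : ℕ) : ℝ) * r ^ n) := by gcongr
        _ = _ := by
          rw [div_pow]; field_simp; ring
  have hzb : z ∈ Metric.ball (0 : ℝ) r := by simpa using hr1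
  have key := hasDerivAt_tsum_of_isPreconnected hu Metric.isOpen_ball
    (convex_ball (0 : ℝ) r).isPreconnected
    (g := fun n w => PowerSeries.coeff n A * w ^ n)
    (fun n y _ => (hasDerivAt_pow n y).const_mul (PowerSeries.coeff n A)) hbd hzb (hA z hz) hzb
  refine ⟨_, key, ?_⟩
  have hsum : Summable fun n : ℕ => PowerSeries.coeff n A * (n * z ^ (n - 1)) :=
    Summable.of_norm_bounded hu fun n => hbd n z hzb
  have h := (hasSum_nat_add_iff' 1).2 hsum.hasSum
  unfold SumsTo
  simp only [Finset.range_one, Finset.sum_singleton, Nat.cast_zero, zero_mul, mul_zero,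
    sub_zero] at h
  refine h.congr_fun ?_
  intro n
  rw [PowerSeries.coeff_derivative]
  simp only [Nat.add_sub_cancel, Nat.cast_add, Nat.cast_one]
  ring

open PowerSeries in
theorem coeff_theta (A : PowerSeries ℝ) (n : ℕ) :
    coeff n (X * d⁄dX ℝ A) = n * coeff n A := by
  cases n with
  | zero => rw [coeff_zero_X_mul]; simp
  | succ n => rw [coeff_succ_X_mul, coeff_derivative]; push_cast; ring

open PowerSeries in
theorem theta_theta (A : PowerSeries ℝ) :
    X * d⁄dX ℝ (X * d⁄dX ℝ A) = X * d⁄dX ℝ A + X * (X * d⁄dX ℝ (d⁄dX ℝ A)) := by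
  rw [Derivation.leibniz]
  simp only [derivative_X, smul_eq_mul]
  ring

theorem poch_pos (c : ℝ) (hc : 0 < c) (n : ℕ) : 0 < poch c n := by
  induction n with
  | zero => simp [poch]
  | succ n ih => rw [poch]; positivity

theorem poch_ne (c : ℝ) (hc : -1 < c) (hc0 : c ≠ 0) (n : ℕ) : poch c n ≠ 0 := by
  induction n with
  | zero => simp [poch]
  | succ n ih =>
    rw [poch]
    refine mul_ne_zero ih ?_
    cases n with
    | zero => simpa using hc0
    | succ n => push_cast; have : (0 : ℝ) ≤ n := n.cast_nonneg; linarith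

/-- hypergeometric coefficient -/
noncomputable def hco (a b c : ℝ) (n : ℕ) : ℝ :=
  poch a n * poch b n / poch c n / (Nat.factorial n : ℝ)

theorem hco_succ (a b c : ℝ) (hc : 0 < c) (n : ℕ) :
    hco a b c (n + 1) = (a + n) * (b + n) / ((c + n) * (n + 1)) * hco a b c n := by
  have h1 := (poch_pos c hc n).ne'
  have h3 : c + n ≠ 0 := by positivity
  have h4 : ((n.factorial : ℕ) : ℝ) ≠ 0 := by positivity
  simp only [hco, poch, Nat.factorial_succ]
  push_cast
  field_simp

theorem hco_summable (a b c : ℝ) (ha : -1 < a) (ha0 : a ≠ 0) (hb : 0 < b) (hc : 0 < c)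
    (x : ℝ) (hx : |x| < 1) : Summable fun n => hco a b c n * x ^ n := by
  by_cases hx0 : x = 0
  · subst hx0
    refine summable_of_ne_finset_zero (s := {0}) ?_
    intro n hn
    simp at hn
    simp [hn]
  have hne : ∀ n, hco a b c n ≠ 0 := fun n => by
    unfold hco
    have := poch_ne a ha ha0 n
    have := (poch_pos b hb n).ne'
    have := (poch_pos c hc n).ne'
    positivity
  refine summable_of_ratio_test_tendsto_lt_one hx
    (Filter.Eventually.of_forall fun n => mul_ne_zero (hne n) (pow_ne_zero n hx0)) ?_
  have hlim : ∀ d e : ℝ, Filter.Tendsto (fun n : ℕ => (d + n) / (e + n)) Filter.atTop (nhds 1) := by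
    intro d e
    have h1 := tendsto_add_mul_div_add_mul_atTop_nhds d e (1 : ℝ) (d := (1:ℝ)) one_ne_zero
    simpa using h1
  have h := (((hlim a c).mul (hlim b 1)).abs).mul_const |x|
  simp only [mul_one, abs_one, one_mul] at h
  refine h.congr fun n => ?_
  rw [← Real.norm_eq_abs, ← Real.norm_eq_abs, ← norm_mul, ← norm_div, hco_succ a b c hc]
  congr 1
  have := hne n
  have : c + n ≠ 0 := by positivity
  field_simp
  ring

/-- even power series -/
noncomputable def evenSer (h : ℕ → ℝ) : PowerSeries ℝ :=
  PowerSeries.mk fun n => if Even n then h (n / 2) else 0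

theorem evenSer_sum (h : ℕ → ℝ) (z v : ℝ) (hs : HasSum (fun n => h n * (z ^ 2) ^ n) v) :
    SumsTo (evenSer h) z v := by
  unfold SumsTo
  rw [← add_zero v]
  refine HasSum.even_add_odd ?_ ?_
  · refine hs.congr_fun fun n => ?_
    simp [evenSer, pow_mul]
  · refine (hasSum_zero).congr_fun fun n => ?_
    simp [evenSer]

open PowerSeries in
theorem evenSer_ode (s b q : ℝ) (hq : 0 < q) (h : ℕ → ℝ)
    (hh : ∀ n : ℕ, h (n + 1) = (s / 2 + n) * (b / 2 + n) / ((q + 1 / 2 + n) * (n + 1)) * h n)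
    (hs : s = b + 2 * q - 1) :
    X * (1 - X ^ 2) * d⁄dX ℝ (d⁄dX ℝ (evenSer h)) -
      ((2 * C b + 2 * C q) * X ^ 2 * d⁄dX ℝ (evenSer h) + X * C s * C b * evenSer h
        - 2 * C q * d⁄dX ℝ (evenSer h)) = 0 := by
  set U := evenSer h with hU
  have hrec : ∀ n : ℕ, (n + 2) * (n + 1 + 2 * q) * coeff (n + 2) U
      = (n + s) * (n + b) * coeff n U := by
    intro n
    rcases Nat.even_or_odd n with hn | hn
    · obtain ⟨k, rfl⟩ := hn
      have e1 : (k + k + 2) / 2 = k + 1 := by omega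
      have e2 : (k + k) / 2 = k := by omega
      have e3 : Even (k + k + 2) := ⟨k + 1, by ring⟩
      have e4 : Even (k + k) := ⟨k, rfl⟩
      simp only [hU, evenSer, coeff_mk, e1, e2, e3, e4, if_true, hh]
      have : q + 1 / 2 + k ≠ 0 := by positivity
      push_cast
      field_simp
      ring
    · have e3 : ¬ Even (n + 2) := by grind
      have e4 : ¬ Even n := by grind
      simp [hU, evenSer, coeff_mk, e3, e4]
  have hX : (X : PowerSeries ℝ) ≠ 0 := X_ne_zero
  apply mul_left_cancel₀ hX
  rw [mul_zero]
  have key : X * d⁄dX ℝ (X * d⁄dX ℝ U) + C (2 * q - 1) * (X * d⁄dX ℝ U)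
      = X * (X * (X * d⁄dX ℝ (X * d⁄dX ℝ U) + C (s + b) * (X * d⁄dX ℝ U) + C (s * b) * U)) := by
    ext n
    rcases n with _ | _ | n
    · rw [coeff_zero_X_mul, map_add, coeff_C_mul, coeff_theta, coeff_theta]; simp
    · rw [coeff_succ_X_mul, coeff_zero_X_mul, map_add, coeff_C_mul, coeff_theta, coeff_theta]
      simp [hU, evenSer]
    · rw [coeff_succ_X_mul, coeff_succ_X_mul]
      simp only [map_add (coeff n), map_add (coeff (n + 1 + 1)), coeff_C_mul, coeff_theta]
      have := hrec n
      push_cast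
      linear_combination this
  rw [theta_theta] at key
  rw [hs] at key ⊢
  simp only [map_add, map_sub, map_mul, map_one, map_ofNat] at key ⊢
  linear_combination key

open PowerSeries in
theorem heun_coeff (p q : ℝ) (hq : 0 < q) (y : ℕ → ℝ) (k : ℝ) (Y : PowerSeries ℝ)
    (h0 : y 0 = 1) (h1 : y 1 = p * q / (2 * q + 1))
    (hrec : ∀ n : ℕ,
      ((n : ℝ) + 2) * ((n : ℝ) + 2 * q + 2) * y (n + 2) =
        p * ((n : ℝ) + q + 1) * y (n + 1) + (n : ℝ) * ((n : ℝ) + 2 * q) * y n)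
    (hY0 : coeff 0 Y = k)
    (hY : (1 - X ^ 2) * (X * d⁄dX ℝ (d⁄dX ℝ Y) + (1 + 2 * C q) * d⁄dX ℝ Y)
      - C p * (X * d⁄dX ℝ Y + C q * Y) = 0) (n : ℕ) : coeff n Y = k * y n := by
  have key : X * d⁄dX ℝ (X * d⁄dX ℝ Y) + C (2 * q) * (X * d⁄dX ℝ Y)
      = X * (X * (X * d⁄dX ℝ (X * d⁄dX ℝ Y) + C (2 * q) * (X * d⁄dX ℝ Y)))
        + X * (C p * (X * d⁄dX ℝ Y) + C (p * q) * Y) := by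
    rw [theta_theta]
    simp only [map_mul, map_ofNat]
    linear_combination X * hY
  have e1 : coeff 1 Y = k * y 1 := by
    have := congrArg (coeff 1) key
    rw [map_add, map_add, coeff_succ_X_mul 0 (X * _), coeff_zero_X_mul,
      coeff_succ_X_mul 0 (_ + _), map_add] at this
    simp only [coeff_C_mul, coeff_theta] at this
    rw [hY0] at this
    rw [h1]
    field_simp
    push_cast at this
    linear_combination this
  have e2 : ∀ n : ℕ, ((n : ℝ) + 2) * ((n : ℝ) + 2 * q + 2) * coeff (n + 2) Y =
        p * ((n : ℝ) + q + 1) * coeff (n + 1) Y + (n : ℝ) * ((n : ℝ) + 2 * q) * coeff n Y := by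
    intro n
    have := congrArg (coeff (n + 2)) key
    rw [map_add, map_add, coeff_succ_X_mul (n + 1) (X * _), coeff_succ_X_mul n (_ + _),
      coeff_succ_X_mul (n + 1) (_ + _), map_add, map_add] at this
    simp only [coeff_C_mul, coeff_theta] at this
    push_cast at this
    linear_combination this
  induction n using Nat.strong_induction_on with
  | _ n ih =>
    rcases n with _ | _ | n
    · rw [hY0, h0, mul_one]
    · exact e1
    · have a1 := e2 n
      rw [ih n (by omega), ih (n + 1) (by omega)] at a1
      have a2 := hrec n
      have a3 : ((n : ℝ) + 2) * ((n : ℝ) + 2 * q + 2) ≠ 0 := by positivity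
      apply mul_left_cancel₀ a3
      linear_combination a1 - k * a2

open PowerSeries in
/-- **Compact hypergeometric representation of the Heun function:**
with `F(z) = (1-z)^{p/2+2q-1}/(p/2+2q-1) · ₂F₁(p/4+q-1/2, p/4; q+1/2; z²)`,
the Heun series `∑ yₙ zⁿ` equals
`-(1-z)^{2(1-q)} ((1+z)/(1-z))^{p/2} F'(z)` on `(0,1)`. -/
theorem heun_eq_hypergeometric
    (p q : ℝ) (hp : 0 < p) (hq : 0 < q) (hpq : p / 2 + 2 * q - 1 ≠ 0)
    (y : ℕ → ℝ)
    (h0 : y 0 = 1) (h1 : y 1 = p * q / (2 * q + 1))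
    (hrec : ∀ n : ℕ,
      ((n : ℝ) + 2) * ((n : ℝ) + 2 * q + 2) * y (n + 2) =
        p * ((n : ℝ) + q + 1) * y (n + 1) + (n : ℝ) * ((n : ℝ) + 2 * q) * y n)
    (F : ℝ → ℝ)
    (hF : F = fun z =>
      (1 - z) ^ (p / 2 + 2 * q - 1) / (p / 2 + 2 * q - 1) *
        hyp2F1 (p / 4 + q - 1 / 2) (p / 4) (q + 1 / 2) (z ^ 2)) :
    ∀ z ∈ Set.Ioo (0:ℝ) 1,
      (∑' n : ℕ, y n * z ^ n) =
        -(1 - z) ^ (2 * (1 - q)) * ((1 + z) / (1 - z)) ^ (p / 2) * deriv F z := by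
  intro z hz
  obtain ⟨hz0, hz1⟩ := hz
  have hzabs : |z| < 1 := by rw [abs_of_pos hz0]; exact hz1
  obtain ⟨s, hs⟩ : ∃ s, s = p / 2 + 2 * q - 1 := ⟨_, rfl⟩
  rw [← hs] at hF hpq
  have ha : p / 4 + q - 1 / 2 = s / 2 := by rw [hs]; ring
  have hb : p / 4 = p / 2 / 2 := by ring
  have hb0 : 0 < p / 2 / 2 := by positivity
  have hc0 : 0 < q + 1 / 2 := by positivity
  rw [ha, hb] at hF
  let h := hco (s / 2) (p / 2 / 2) (q + 1 / 2)
  let U := evenSer h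
  have hsq : ∀ w : ℝ, |w| < 1 → |w ^ 2| < 1 := fun w hw => by
    rw [abs_pow]; exact pow_lt_one₀ (abs_nonneg w) hw two_ne_zero
  have hhs : ∀ w : ℝ, |w| < 1 →
      SumsTo U w (hyp2F1 (s / 2) (p / 2 / 2) (q + 1 / 2) (w ^ 2)) := by
    intro w hw
    apply evenSer_sum
    have := (hco_summable (s / 2) (p / 2 / 2) (q + 1 / 2) (by linarith)
      (by simpa using hpq) hb0 hc0 (w ^ 2) (hsq w hw)).hasSum
    convert this using 1
    unfold hyp2F1 hco
    congr 1
    ext n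
    ring
  obtain ⟨v, hv, hv'⟩ := sumsTo_deriv U (fun w hw => (hhs w hw).summable) z hzabs
  set H := hyp2F1 (s / 2) (p / 2 / 2) (q + 1 / 2) (z ^ 2) with hH
  -- derivative of F
  have hHd : HasDerivAt (fun w => hyp2F1 (s / 2) (p / 2 / 2) (q + 1 / 2) (w ^ 2)) v z := by
    refine hv.congr_of_eventuallyEq ?_
    filter_upwards [Ioo_mem_nhds hz0 hz1] with w hw
    have hw' : |w| < 1 := by rw [abs_of_pos hw.1]; exact hw.2
    exact (hhs w hw').tsum_eq.symm
  have h1z : 0 < 1 - z := by linarith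
  have h1z' : 0 < 1 + z := by linarith
  have hpow : HasDerivAt (fun w : ℝ => (1 - w) ^ s / s) (-(1 - z) ^ (s - 1)) z := by
    have := (((hasDerivAt_id z).const_sub 1).rpow_const (p := s) (Or.inl h1z.ne')).div_const s
    refine this.congr_deriv ?_
    simp only [id]
    field_simp
  have hFd : deriv F z = -(1 - z) ^ (s - 1) * H + (1 - z) ^ s / s * v := by
    rw [hF]
    exact (hpow.mul hHd).deriv
  -- formal part
  let B : PowerSeries ℝ := PowerSeries.mk fun n => Ring.choose (p / 2) n
  let G : PowerSeries ℝ := C s * U - (C 1 - X) * d⁄dX ℝ U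
  have hO := evenSer_ode s (p / 2) q hq h (fun n => hco_succ _ _ _ hc0 n) hs
  have hB := binom_ode (p / 2)
  change (1 + X) * d⁄dX ℝ B = C (p / 2) * B at hB
  change X * (1 - X ^ 2) * d⁄dX ℝ (d⁄dX ℝ U) -
      ((2 * C (p / 2) + 2 * C q) * X ^ 2 * d⁄dX ℝ U + X * C s * C (p / 2) * U
        - 2 * C q * d⁄dX ℝ U) = 0 at hO
  have hB2 := congrArg (d⁄dX ℝ) hB
  have hO1 := congrArg (d⁄dX ℝ) hO
  have d2 : d⁄dX ℝ (2 : PowerSeries ℝ) = 0 := by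
    have : (2 : PowerSeries ℝ) = C 2 := (map_ofNat C 2).symm
    rw [this, derivative_C]
  simp only [map_add, map_sub, Derivation.leibniz, Derivation.leibniz_pow, derivative_X,
    derivative_C, d2, smul_eq_mul, Derivation.map_one_eq_zero, map_zero, nsmul_eq_mul] at hB2 hO1
  have hp2 : C p = 2 * C (p / 2) := by
    have : (2 : PowerSeries ℝ) = C 2 := (map_ofNat C 2).symm
    rw [this, ← map_mul]; congr 1; ring
  have hCs : C s = C (p / 2) + 2 * C q - 1 := by
    have : (2 : PowerSeries ℝ) = C 2 := (map_ofNat C 2).symm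
    rw [hs, this, ← map_mul, ← map_add, ← (C (R := ℝ)).map_one, ← map_sub]
  have hG1 : d⁄dX ℝ G = (C s + 1) * d⁄dX ℝ U - (1 - X) * d⁄dX ℝ (d⁄dX ℝ U) := by
    simp only [G, map_add, map_sub, Derivation.leibniz, derivative_X,
      derivative_C, smul_eq_mul, map_one, Derivation.map_one_eq_zero]
    ring
  have hG2 : d⁄dX ℝ (d⁄dX ℝ G) =
      (C s + 2) * d⁄dX ℝ (d⁄dX ℝ U) - (1 - X) * d⁄dX ℝ (d⁄dX ℝ (d⁄dX ℝ U)) := by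
    rw [hG1]
    simp only [map_add, map_sub, Derivation.leibniz, derivative_X,
      derivative_C, smul_eq_mul, Derivation.map_one_eq_zero]
    ring
  have halg := heun_alg X (C (p / 2)) (C q) U (d⁄dX ℝ U) (d⁄dX ℝ (d⁄dX ℝ U))
    (d⁄dX ℝ (d⁄dX ℝ (d⁄dX ℝ U))) B (d⁄dX ℝ B) (d⁄dX ℝ (d⁄dX ℝ B)) (C s) G (d⁄dX ℝ G)
    (d⁄dX ℝ (d⁄dX ℝ G)) hCs (by simp [G]) hG1 hG2 hB (by linear_combination hB2) hO
    (by push_cast at hO1; linear_combination hO1)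
  have hX1 : ((1 + X) ^ 2 : PowerSeries ℝ) ≠ 0 := by
    apply pow_ne_zero
    intro h0
    have := congrArg (coeff 0) h0
    simp at this
  have hode := (mul_eq_zero.mp halg).resolve_left hX1
  have hY1 : d⁄dX ℝ (B * G) = d⁄dX ℝ B * G + B * d⁄dX ℝ G := by
    simp only [Derivation.leibniz, smul_eq_mul]; ring
  have hY2 : d⁄dX ℝ (d⁄dX ℝ (B * G)) =
      d⁄dX ℝ (d⁄dX ℝ B) * G + 2 * d⁄dX ℝ B * d⁄dX ℝ G + B * d⁄dX ℝ (d⁄dX ℝ G) := by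
    rw [hY1]; simp only [map_add, Derivation.leibniz, smul_eq_mul]; ring
  have hU0 : coeff 0 U = 1 := by simp [U, evenSer, h, hco, poch]
  have hU1 : coeff 1 U = 0 := by simp [U, evenSer]
  have hB0 : coeff 0 B = 1 := by simp [B]
  have hG0 : coeff 0 G = s := by
    simp only [G, sub_mul, map_sub (coeff 0), coeff_C_mul, coeff_zero_X_mul, coeff_derivative, hU0]
    simp [hU1]
  have hY0 : coeff 0 (B * G) = s := by
    rw [coeff_zero_eq_constantCoeff_apply] at hB0 hG0 ⊢
    rw [map_mul, hB0, hG0, one_mul]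
  have hco := heun_coeff p q hq y s (B * G) h0 h1 hrec hY0 (by
    rw [hY2, hY1, hp2]; exact hode)
  have hsum : SumsTo (B * G) z ((1 + z) ^ (p / 2) * (s * H - (1 - z) * v)) :=
    (sumsTo_binom (p / 2) z hzabs).mul
      (((sumsTo_C s z).mul (hhs z hzabs)).sub (((sumsTo_C 1 z).sub (sumsTo_X z)).mul hv'))
  have hfin := hsum.tsum_eq
  simp only [hco, mul_assoc, tsum_mul_left] at hfin
  apply mul_left_cancel₀ hpq
  rw [hfin, hFd, Real.div_rpow h1z'.le h1z.le]
  have r1 : (1 - z) ^ s = (1 - z) ^ (s - 1) * (1 - z) := by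
    rw [← Real.rpow_add_one h1z.ne']; congr 1; ring
  have r2 : (1 - z) ^ (2 * (1 - q)) * (1 - z) ^ (s - 1) = (1 - z) ^ (p / 2) := by
    rw [← Real.rpow_add h1z]; congr 1; rw [hs]; ring
  have r3 : (1 - z) ^ (p / 2) ≠ 0 := (Real.rpow_pos_of_pos h1z _).ne'
  rw [r1]
  field_simp
  rw [← r2]
  ring
end

section
/- For every q > 0: ∫_ℝ q·e^{−2q|w|} · ln( cosh w ) dw = (1/2) · [ 1/q − ψ(q/2 + 1) + ψ((q + 1)/2) ], where ψ denotes the digamma function, ψ(x) := deriv (fun x => Real.log (Real.Gamma x)) x, i.e. the logarithmic derivative of the Gamma function. In particular, for q = 1 the integral equals ln 2 − 1/2. -/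
open MeasureTheory Set Filter Topology

lemma aux_logGamma_diff {x : ℝ} (hx : 0 < x) :
    DifferentiableAt ℝ (fun x => Real.log (Real.Gamma x)) x := by
  apply DifferentiableAt.log
  · apply Real.differentiableAt_Gamma
    intro m hm
    have : (0 : ℝ) ≤ m := Nat.cast_nonneg m
    linarith
  · exact (Real.Gamma_pos_of_pos hx).ne'

lemma aux_digamma_add_one {x : ℝ} (hx : 0 < x) : digamma (x + 1) = digamma x + 1 / x := by
  have h1 : HasDerivAt (fun y => Real.log (Real.Gamma (y + 1))) (digamma (x + 1)) x :=
    HasDerivAt.comp_add_const x 1 (aux_logGamma_diff (by linarith : 0 < x + 1)).hasDerivAt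
  have h2 : HasDerivAt (fun y => Real.log (Real.Gamma y) + Real.log y) (digamma x + 1 / x) x := by
    have := (aux_logGamma_diff hx).hasDerivAt.add (Real.hasDerivAt_log hx.ne')
    rw [one_div]
    exact this
  have h3 : (fun y => Real.log (Real.Gamma (y + 1))) =ᶠ[𝓝 x]
      (fun y => Real.log (Real.Gamma y) + Real.log y) := by
    filter_upwards [lt_mem_nhds hx] with y hy
    rw [Real.Gamma_add_one hy.ne', Real.log_mul hy.ne' (Real.Gamma_pos_of_pos hy).ne', add_comm]
  exact h1.unique (h2.congr_of_eventuallyEq h3)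

lemma aux_digamma_mono {x y : ℝ} (hx : 0 < x) (hxy : x ≤ y) : digamma x ≤ digamma y := by
  have := ConvexOn.monotoneOn_deriv Real.convexOn_log_Gamma
    (fun x hx => aux_logGamma_diff hx)
  exact this (mem_Ioi.2 hx) (mem_Ioi.2 (hx.trans_le hxy)) hxy

lemma aux_th_bd {w : ℝ} (hw : 0 ≤ w) :
    0 ≤ Real.sinh w / Real.cosh w ∧ Real.sinh w / Real.cosh w ≤ 1 := by
  have h := Real.cosh_pos w
  exact ⟨div_nonneg (Real.sinh_nonneg_iff.2 hw) h.le,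
    (div_le_one h).2 (Real.sinh_lt_cosh w).le⟩

lemma aux_lc_bd {w : ℝ} (hw : 0 ≤ w) :
    0 ≤ Real.log (Real.cosh w) ∧ Real.log (Real.cosh w) ≤ w := by
  refine ⟨Real.log_nonneg (Real.one_le_cosh w), ?_⟩
  rw [Real.log_le_iff_le_exp (Real.cosh_pos w)]
  have := Real.sinh_nonneg_iff.2 hw
  have h2 := Real.cosh_add_sinh w
  linarith

lemma aux_cont_th : Continuous (fun w : ℝ => Real.sinh w / Real.cosh w) :=
  Real.continuous_sinh.div Real.continuous_cosh (fun w => (Real.cosh_pos w).ne')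

lemma aux_cont_lc : Continuous (fun w : ℝ => Real.log (Real.cosh w)) :=
  Real.continuous_cosh.log (fun w => (Real.cosh_pos w).ne')

lemma aux_int_th {q : ℝ} (hq : 0 < q) :
    IntegrableOn (fun w : ℝ => Real.exp (-(2 * q) * w) * (Real.sinh w / Real.cosh w)) (Ioi 0) := by
  refine Integrable.mono' (exp_neg_integrableOn_Ioi 0 (by linarith : 0 < 2 * q)) ?_ ?_
  · exact (Continuous.mul (by fun_prop) aux_cont_th).aestronglyMeasurable
  · refine (ae_restrict_iff' measurableSet_Ioi).2 (Eventually.of_forall fun w hw => ?_)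
    have h := aux_th_bd (le_of_lt hw)
    have he := Real.exp_pos (-(2 * q) * w)
    rw [Real.norm_of_nonneg (mul_nonneg he.le h.1)]
    nlinarith [h.2]

lemma aux_elc_bd {q w : ℝ} (hq : 0 < q) (hw : 0 ≤ w) :
    Real.exp (-(2 * q) * w) * Real.log (Real.cosh w) ≤ (1 / q) * Real.exp (-q * w) := by
  have h := aux_lc_bd hw
  have h1 : q * w ≤ Real.exp (q * w) := by linarith [Real.add_one_le_exp (q * w)]
  have h2 : w ≤ (1 / q) * Real.exp (q * w) := by
    rw [one_div, ← div_eq_inv_mul, le_div_iff₀ hq]; linarith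
  calc _ ≤ Real.exp (-(2 * q) * w) * ((1 / q) * Real.exp (q * w)) := by
        gcongr; linarith [h.2]
    _ = (1 / q) * (Real.exp (-(2 * q) * w) * Real.exp (q * w)) := by ring
    _ = _ := by rw [← Real.exp_add]; congr 2; ring

lemma aux_int_lc {q : ℝ} (hq : 0 < q) :
    IntegrableOn (fun w : ℝ => Real.exp (-(2 * q) * w) * Real.log (Real.cosh w)) (Ioi 0) := by
  refine Integrable.mono' ((exp_neg_integrableOn_Ioi 0 hq).const_mul (1 / q)) ?_ ?_
  · exact (Continuous.mul (by fun_prop) aux_cont_lc).aestronglyMeasurable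
  · refine (ae_restrict_iff' measurableSet_Ioi).2 (Eventually.of_forall fun w hw => ?_)
    have h := aux_lc_bd (le_of_lt hw)
    rw [Real.norm_of_nonneg (mul_nonneg (Real.exp_pos _).le h.1)]
    exact aux_elc_bd hq (le_of_lt hw)

/-- `J q = ∫₀^∞ e^{-2qw} tanh w dw`. -/
noncomputable def auxJ (q : ℝ) : ℝ :=
  ∫ w in Ioi (0 : ℝ), Real.exp (-(2 * q) * w) * (Real.sinh w / Real.cosh w)

lemma aux_by_parts {q : ℝ} (hq : 0 < q) :
    2 * q * ∫ w in Ioi (0 : ℝ), Real.exp (-(2 * q) * w) * Real.log (Real.cosh w) = auxJ q := by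
  have key := integral_Ioi_of_hasDerivAt_of_tendsto (a := 0) (m := 0)
    (f := fun w : ℝ => Real.exp (-(2 * q) * w) * Real.log (Real.cosh w))
    (f' := fun w : ℝ => Real.exp (-(2 * q) * w) * (Real.sinh w / Real.cosh w)
      - 2 * q * (Real.exp (-(2 * q) * w) * Real.log (Real.cosh w)))
    (Continuous.mul (by fun_prop) aux_cont_lc).continuousWithinAt
    (fun w _ => by
      have h1 : HasDerivAt (fun w : ℝ => Real.exp (-(2 * q) * w))
          (Real.exp (-(2 * q) * w) * (-(2 * q) * 1)) w :=
        ((hasDerivAt_id w).const_mul (-(2 * q))).exp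
      have h2 := (Real.hasDerivAt_cosh w).log (Real.cosh_pos w).ne'
      exact (h1.mul h2).congr_deriv (by ring))
    ((aux_int_th hq).sub ((aux_int_lc hq).const_mul (2 * q)))
    (by
      have hl : Tendsto (fun w : ℝ => (1 / q) * Real.exp (-q * w)) atTop (𝓝 0) := by
        rw [← mul_zero (1 / q)]
        refine Tendsto.const_mul _ (Real.tendsto_exp_atBot.comp ?_)
        exact tendsto_id.const_mul_atTop_of_neg (by linarith)
      refine tendsto_of_tendsto_of_tendsto_of_le_of_le' tendsto_const_nhds hl ?_ ?_
      · filter_upwards [eventually_ge_atTop 0] with w hw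
        exact mul_nonneg (Real.exp_pos _).le (aux_lc_bd hw).1
      · filter_upwards [eventually_ge_atTop 0] with w hw
        exact aux_elc_bd hq hw)
  rw [integral_sub (aux_int_th hq) ((aux_int_lc hq).const_mul (2 * q)), integral_const_mul] at key
  simp only [Real.cosh_zero, Real.log_one, mul_zero, sub_zero] at key
  unfold auxJ
  linarith

lemma aux_exp_int {q : ℝ} (hq : 0 < q) :
    ∫ w in Ioi (0 : ℝ), Real.exp (-(2 * q) * w) = 1 / (2 * q) := by
  rw [integral_exp_mul_Ioi (by linarith)]
  simp

lemma auxJ_rec {q : ℝ} (hq : 0 < q) :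
    auxJ q + auxJ (q + 1) = 1 / (2 * q) - 1 / (2 * (q + 1)) := by
  have hq1 : 0 < q + 1 := by linarith
  unfold auxJ
  rw [← integral_add (aux_int_th hq) (aux_int_th hq1), ← aux_exp_int hq, ← aux_exp_int hq1,
    ← integral_sub (exp_neg_integrableOn_Ioi 0 (by linarith : 0 < 2 * q))
      (exp_neg_integrableOn_Ioi 0 (by linarith : 0 < 2 * (q + 1)))]
  congr 1
  funext w
  have e1 : Real.exp (-(2 * (q + 1)) * w)
      = Real.exp (-(2 * q) * w) * (Real.exp (-w) * Real.exp (-w)) := by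
    rw [← Real.exp_add, ← Real.exp_add]; congr 1; ring
  have e2 : Real.exp w * Real.exp (-w) = 1 := by rw [← Real.exp_add]; simp
  rw [e1, Real.sinh_eq, Real.cosh_eq]
  have hp := Real.exp_pos w
  have hn := Real.exp_pos (-w)
  generalize Real.exp w = a at *
  generalize Real.exp (-w) = b at *
  have : a + b ≠ 0 := by positivity
  field_simp
  linear_combination (2 * b) * e2

lemma auxJ_bd {q : ℝ} (hq : 0 < q) : 0 ≤ auxJ q ∧ auxJ q ≤ 1 / (2 * q) := by
  constructor
  · refine setIntegral_nonneg measurableSet_Ioi fun w hw => ?_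
    exact mul_nonneg (Real.exp_pos _).le (aux_th_bd (le_of_lt hw)).1
  · rw [← aux_exp_int hq]
    refine setIntegral_mono_on (aux_int_th hq)
      (exp_neg_integrableOn_Ioi 0 (by linarith : 0 < 2 * q)) measurableSet_Ioi fun w hw => ?_
    exact mul_le_of_le_one_right (Real.exp_pos _).le (aux_th_bd (le_of_lt hw)).2

/-- The difference of the two sides. -/
noncomputable def auxD (q : ℝ) : ℝ :=
  auxJ q - (1 / 2) * (1 / q - digamma (q / 2 + 1) + digamma ((q + 1) / 2))

lemma auxD_rec {q : ℝ} (hq : 0 < q) : auxD (q + 1) = - auxD q := by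
  have h := auxJ_rec hq
  have h2 := aux_digamma_add_one (by linarith : 0 < (q + 1) / 2)
  have e : (q + 1 + 1) / 2 = q / 2 + 1 := by ring
  unfold auxD
  rw [h2, e]
  have h3 : auxJ (q + 1) = 1 / (2 * q) - 1 / (2 * (q + 1)) - auxJ q := by linarith
  rw [h3]
  have : q + 1 ≠ 0 := by positivity
  field_simp
  ring

lemma auxD_bd {q : ℝ} (hq : 0 < q) : |auxD q| ≤ 2 / q := by
  have h := auxJ_bd hq
  have h1 := aux_digamma_mono (by linarith : 0 < (q + 1) / 2) (by linarith : (q + 1) / 2 ≤ q / 2 + 1)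
  have h2 := aux_digamma_mono (by linarith : 0 < q / 2 + 1)
    (by linarith : q / 2 + 1 ≤ (q + 1) / 2 + 1)
  rw [aux_digamma_add_one (by linarith : 0 < (q + 1) / 2)] at h2
  have h3 : 1 / ((q + 1) / 2) ≤ 2 * (1 / q) := by
    rw [one_div_div, mul_one_div]
    gcongr
    linarith
  have h4 : 1 / (2 * q) = (1 / q) / 2 := by field_simp
  have h5 : 2 / q = 2 * (1 / q) := by field_simp
  have h6 : 0 < 1 / q := by positivity
  rw [h4] at h
  rw [h5]
  unfold auxD
  rw [abs_le]
  constructor <;> linarith [h.1, h.2]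

lemma auxD_zero {q : ℝ} (hq : 0 < q) : auxD q = 0 := by
  have h1 : ∀ n : ℕ, |auxD (q + n)| = |auxD q| := by
    intro n
    induction n with
    | zero => simp
    | succ k ih =>
      rw [Nat.cast_succ, ← add_assoc, auxD_rec (by positivity), abs_neg, ih]
  have hl : Tendsto (fun n : ℕ => 2 / (q + n)) atTop (𝓝 0) :=
    tendsto_const_nhds.div_atTop
      (tendsto_atTop_add_const_left _ _ tendsto_natCast_atTop_atTop)
  have h2 : |auxD q| ≤ 0 := ge_of_tendsto' hl fun n => by
    rw [← h1 n]; exact auxD_bd (by positivity)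
  exact abs_eq_zero.1 (le_antisymm h2 (abs_nonneg _))

lemma aux_main (q : ℝ) (hq : 0 < q) :
    ∫ w : ℝ, q * Real.exp (-(2 * q * |w|)) * Real.log (Real.cosh w) =
        (1 / 2) * (1 / q - digamma (q / 2 + 1) + digamma ((q + 1) / 2)) := by
  have h := integral_comp_abs
    (f := fun w : ℝ => q * (Real.exp (-(2 * q) * w) * Real.log (Real.cosh w)))
  simp only [Real.cosh_abs, neg_mul] at h
  simp only [mul_assoc] at h ⊢
  rw [h, integral_const_mul]
  have h2 := aux_by_parts hq
  simp only [neg_mul, mul_assoc] at h2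
  rw [h2]
  have := auxD_zero hq
  unfold auxD at this
  linarith

lemma aux_digamma_one : digamma 1 = -Real.eulerMascheroniConstant := by
  have := (Real.hasDerivAt_Gamma_one.log (by simp)).deriv
  unfold digamma
  rw [this]; simp

lemma aux_digamma_half :
    digamma (1 / 2) = -(Real.eulerMascheroniConstant + 2 * Real.log 2) := by
  have hp : √Real.pi ≠ 0 := (Real.sqrt_pos.2 Real.pi_pos).ne'
  have := (Real.hasDerivAt_Gamma_one_half.log
    (by rw [Real.Gamma_one_half_eq]; exact hp)).deriv
  unfold digamma
  rw [this, Real.Gamma_one_half_eq]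
  field_simp

/-- **Expectation of `ln cosh` under the Laplace law.**
For every `q > 0`,
`∫_ℝ q e^{-2q|w|} ln(cosh w) dw = ½ [1/q - ψ(q/2+1) + ψ((q+1)/2)]`;
in particular, for `q = 1` the integral equals `ln 2 - 1/2`. -/
theorem laplace_expectation_log_cosh :
    (∀ q : ℝ, 0 < q →
      ∫ w : ℝ, q * Real.exp (-(2 * q * |w|)) * Real.log (Real.cosh w) =
        (1 / 2) * (1 / q - digamma (q / 2 + 1) + digamma ((q + 1) / 2))) ∧
    (∫ w : ℝ, (1:ℝ) * Real.exp (-(2 * 1 * |w|)) * Real.log (Real.cosh w) =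
      Real.log 2 - 1 / 2) := by
  refine ⟨aux_main, ?_⟩
  rw [aux_main 1 one_pos]
  have e2 : ((1 : ℝ) + 1) / 2 = 1 := by norm_num
  rw [e2, aux_digamma_add_one (by norm_num : (0 : ℝ) < 1 / 2), aux_digamma_one, aux_digamma_half]
  ring
end
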